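/- arXiv:0910.2055 — 3 statements merged into one kernel-verified Lean document; each statement's English description precedes it below -/
import Mathlib

section
/- Let V be a 24-dimensional real inner product space, Υ a lattice in V such that √2·Υ is even and unimodular, and M, N a polarization of Υ in which M and N are both even unimodular lattices (Niemeier lattices). Then: (i) μ(L(M,N,3)) ≥ 4; and (ii) if μ(M) = 2, then μ(L(M,N,3)) = 4. -/
noncomputable section

open scoped RealInnerProductSpace Pointwise
open Module

variable {V : Type*} [NormedAddCommGroup V] [InnerProductSpace ℝ V]

/-- `L` is a (full) lattice in `V`: a finitely generated `ℤ`-submodule spanning `V` over `ℝ`. -/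
def IsLat (L : Submodule ℤ V) : Prop :=
  L.FG ∧ Submodule.span ℝ (L : Set V) = ⊤

/-- The lattice `L` is integral: all inner products of lattice vectors are integers. -/
def IsIntegralLat (L : Submodule ℤ V) : Prop :=
  ∀ x ∈ L, ∀ y ∈ L, ∃ n : ℤ, ⟪x, y⟫ = (n : ℝ)

/-- The lattice `L` is even: it is integral and all norms are even integers. -/
def IsEvenLat (L : Submodule ℤ V) : Prop :=
  IsIntegralLat L ∧ ∀ x ∈ L, ∃ n : ℤ, ⟪x, x⟫ = 2 * (n : ℝ)

/-- The lattice `L` is unimodular: the Gram matrix of some `ℤ`-basis has determinant 1. -/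
def IsUnimodularLat (L : Submodule ℤ V) : Prop :=
  ∃ (n : ℕ) (b : Basis (Fin n) ℤ L),
    (Matrix.of fun i j : Fin n => ⟪(b i : V), (b j : V)⟫).det = 1

/-- The minimum norm `μ(L)` of a lattice. -/
def minNorm (L : Submodule ℤ V) : ℝ :=
  sInf {r : ℝ | ∃ x ∈ L, x ≠ 0 ∧ ⟪x, x⟫ = r}

/-- `√2·Υ` is an even unimodular lattice: all norms of `Υ` are integers, all doubled inner
products are integers, and the Gram matrix of the form `2⟪·,·⟫` on a `ℤ`-basis of `Υ` has
determinant 1. -/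
def SqrtTwoEvenUnimod (Υ : Submodule ℤ V) : Prop :=
  (∀ x ∈ Υ, ∃ n : ℤ, ⟪x, x⟫ = (n : ℝ)) ∧
  (∀ x ∈ Υ, ∀ y ∈ Υ, ∃ n : ℤ, 2 * ⟪x, y⟫ = (n : ℝ)) ∧
  ∃ (n : ℕ) (b : Basis (Fin n) ℤ Υ),
    (Matrix.of fun i j : Fin n => 2 * ⟪(b i : V), (b j : V)⟫).det = 1

/-- `M, N` is a polarization of `Υ`: a pair of integral sublattices with
`M + N = Υ` and `M ∩ N = 2Υ`. -/
def IsPolarization (Υ M N : Submodule ℤ V) : Prop :=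
  M ≤ Υ ∧ N ≤ Υ ∧ IsIntegralLat M ∧ IsIntegralLat N ∧ M ⊔ N = Υ ∧ M ⊓ N = (2 : ℤ) • Υ

/-- The sublattice `L_M = {(x_1,…,x_k) ∈ M^k : x_1+⋯+x_k ∈ M ∩ N}` of `V^k`. -/
def LsubM (M N : Submodule ℤ V) (k : ℕ) : Submodule ℤ (PiLp 2 fun _ : Fin k => V) where
  carrier := {v | (∀ i, v i ∈ M) ∧ (∑ i, v i) ∈ M ⊓ N}
  add_mem' := fun {a b} ha hb =>
    ⟨fun i => M.add_mem (ha.1 i) (hb.1 i), by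
      have h : (∑ i, (a + b) i) = (∑ i, a i) + ∑ i, b i :=
        (Finset.sum_congr rfl fun i _ => rfl).trans Finset.sum_add_distrib
      rw [h]; exact (M ⊓ N).add_mem ha.2 hb.2⟩
  zero_mem' := ⟨fun _ => M.zero_mem, by
      have h : (∑ i : Fin k, (0 : PiLp 2 fun _ : Fin k => V) i) = 0 :=
        Finset.sum_eq_zero fun _ _ => rfl
      rw [h]; exact (M ⊓ N).zero_mem⟩
  smul_mem' := fun c a ha =>
    ⟨fun i => M.smul_mem c (ha.1 i), by
      have h : (∑ i, (c • a) i) = c • ∑ i, a i := by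
        show (∑ i, c • a i) = c • ∑ i, a i
        exact Finset.smul_sum.symm
      rw [h]; exact (M ⊓ N).smul_mem c ha.2⟩

/-- The diagonal sublattice `L^N = {(y,…,y) : y ∈ N}` of `V^k`. -/
def LsupN (N : Submodule ℤ V) (k : ℕ) : Submodule ℤ (PiLp 2 fun _ : Fin k => V) where
  carrier := {v | ∃ y ∈ N, ∀ i, v i = y}
  add_mem' := fun {a b} ha hb => by
    obtain ⟨ya, hya, ha⟩ := ha
    obtain ⟨yb, hyb, hb⟩ := hb
    exact ⟨ya + yb, N.add_mem hya hyb, fun i => by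
      show a i + b i = ya + yb
      rw [ha i, hb i]⟩
  zero_mem' := ⟨0, N.zero_mem, fun _ => rfl⟩
  smul_mem' := fun c a ha => by
    obtain ⟨y, hy, h⟩ := ha
    exact ⟨c • y, N.smul_mem c hy, fun i => by
      show c • a i = c • y
      rw [h i]⟩

/-- The lattice `L(M,N,k) = L_M + L^N ⊆ V^k`. -/
def LMN (M N : Submodule ℤ V) (k : ℕ) : Submodule ℤ (PiLp 2 fun _ : Fin k => V) :=
  LsubM M N k ⊔ LsupN N k

/-- The Leech polarization setup: `V` is 24-dimensional, `√2·Υ` is even unimodular with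
minimum norm 4, and `M, N` is a polarization of `Υ` by two copies of the Leech lattice. -/
def LeechSetup (Υ M N : Submodule ℤ V) : Prop :=
  Module.finrank ℝ V = 24 ∧ IsLat Υ ∧ SqrtTwoEvenUnimod Υ ∧
  (∀ v ∈ Υ, v ≠ 0 → 4 ≤ 2 * ⟪v, v⟫) ∧
  IsPolarization Υ M N ∧
  IsLat M ∧ IsEvenLat M ∧ IsUnimodularLat M ∧ minNorm M = 4 ∧
  IsLat N ∧ IsEvenLat N ∧ IsUnimodularLat N ∧ minNorm N = 4

/-- `(w,x,y,z) ∈ N × M × M × M` is admissible if `x + y + z ∈ M ∩ N`. -/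
def Admissible (M N : Submodule ℤ V) (w x y z : V) : Prop :=
  w ∈ N ∧ x ∈ M ∧ y ∈ M ∧ z ∈ M ∧ x + y + z ∈ M ⊓ N

/-- An offender is an admissible quadruple all three of whose associated vectors
`w+x, w+y, w+z` have norm 2. -/
def Offender (M N : Submodule ℤ V) (w x y z : V) : Prop :=
  Admissible M N w x y z ∧
  ⟪w + x, w + x⟫ = 2 ∧ ⟪w + y, w + y⟫ = 2 ∧ ⟪w + z, w + z⟫ = 2

/-- A super offender is an offender with `⟪w,w⟫ = 4` whose multiset of norms
`{⟪x,x⟫, ⟪y,y⟫, ⟪z,z⟫}` equals `{6,6,4}`. -/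
def SuperOffender (M N : Submodule ℤ V) (w x y z : V) : Prop :=
  Offender M N w x y z ∧ ⟪w, w⟫ = 4 ∧
  ({⟪x, x⟫, ⟪y, y⟫, ⟪z, z⟫} : Multiset ℝ) = ({6, 6, 4} : Multiset ℝ)

/-!
A vector of `L(M, N, k)` has coordinates `w + x_i` in `Υ`, so when none of them vanishes its norm is
at least `k ≥ 3`, hence at least `4` because `L(M, N, k)` is even. If `w + x_j = 0` for some `j`,
then `w ∈ M ∩ N` and the vector already lies in `L_M`: either two of its coordinates are nonzero
vectors of the even lattice `M`, or a single one is, and that one lies in `M ∩ N = 2Υ`.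
The bound is attained on the vectors `(x, -x, 0, …, 0)` with `x ∈ M` of norm `2`.
-/

variable {Υ M N : Submodule ℤ V} {k : ℕ}

section MinimumNorm

theorem minNorm_le_inner_self {L : Submodule ℤ V} {x : V} (hx : x ∈ L) (hx0 : x ≠ 0) :
    minNorm L ≤ ⟪x, x⟫ := by
  refine csInf_le ⟨0, ?_⟩ ⟨x, hx, hx0, rfl⟩
  rintro _ ⟨y, -, -, rfl⟩
  exact real_inner_self_nonneg

theorem le_minNorm {L : Submodule ℤ V} (hL : L ≠ ⊥) {c : ℝ}
    (h : ∀ x ∈ L, x ≠ 0 → c ≤ ⟪x, x⟫) : c ≤ minNorm L := by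
  obtain ⟨x, hx, hx0⟩ := L.exists_mem_ne_zero_of_ne_bot hL
  refine le_csInf ⟨_, x, hx, hx0, rfl⟩ ?_
  rintro _ ⟨y, hy, hy0, rfl⟩
  exact h y hy hy0

theorem IsLat.ne_bot [Nontrivial V] {L : Submodule ℤ V} (hL : IsLat L) : L ≠ ⊥ := by
  rintro rfl
  have hspan := hL.2
  rw [Submodule.bot_coe, Submodule.span_zero_singleton] at hspan
  exact bot_ne_top hspan

theorem one_le_inner_self_of_eq_intCast {x : V} (hx : ∃ n : ℤ, ⟪x, x⟫ = (n : ℝ)) (hx0 : x ≠ 0) :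
    1 ≤ ⟪x, x⟫ := by
  obtain ⟨n, hn⟩ := hx
  have hpos := real_inner_self_pos.2 hx0
  rw [hn] at hpos ⊢
  exact_mod_cast hpos

theorem IsEvenLat.two_le_inner_self {L : Submodule ℤ V} (hL : IsEvenLat L) {x : V} (hx : x ∈ L)
    (hx0 : x ≠ 0) : 2 ≤ ⟪x, x⟫ := by
  obtain ⟨n, hn⟩ := hL.2 x hx
  have hpos := real_inner_self_pos.2 hx0
  have hn1 : 1 ≤ n := by
    rw [hn] at hpos
    exact_mod_cast pos_of_mul_pos_right hpos zero_le_two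
  have : (1 : ℝ) ≤ n := by exact_mod_cast hn1
  linarith

theorem four_le_inner_self_of_mem_two_smul (hΥ : ∀ u ∈ Υ, u ≠ 0 → 1 ≤ ⟪u, u⟫) {x : V}
    (hx : x ∈ (2 : ℤ) • Υ) (hx0 : x ≠ 0) : 4 ≤ ⟪x, x⟫ := by
  obtain ⟨u, hu, rfl⟩ := (Submodule.mem_smul_pointwise_iff_exists _ _ _).1 hx
  have hu1 := hΥ u hu (right_ne_zero_of_smul hx0)
  have hnorm : ⟪(2 : ℤ) • u, (2 : ℤ) • u⟫ = 4 * ⟪u, u⟫ := by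
    rw [two_zsmul, inner_add_add_self]
    ring
  linarith

end MinimumNorm

section Membership

omit [InnerProductSpace ℝ V]

variable {v : PiLp 2 fun _ : Fin k => V}

theorem mem_LMN :
    v ∈ LMN M N k ↔ ∃ w ∈ N, (∀ i, v i - w ∈ M) ∧ ∑ i, (v i - w) ∈ M ⊓ N := by
  constructor
  · intro hv
    obtain ⟨f, hf, g, ⟨w, hw, hg⟩, rfl⟩ := Submodule.mem_sup.1 hv
    have hcoord : ∀ i, (f + g) i - w = f i := fun i => by
      rw [PiLp.add_apply, hg i, add_sub_cancel_right]
    exact ⟨w, hw, fun i => hcoord i ▸ hf.1 i, by simpa only [hcoord] using hf.2⟩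
  · rintro ⟨w, hw, hM, hsum⟩
    refine Submodule.mem_sup.2 ⟨WithLp.toLp 2 fun i => v i - w, ⟨hM, hsum⟩,
      WithLp.toLp 2 fun _ => w, ⟨w, hw, fun _ => rfl⟩, ?_⟩
    ext i
    exact sub_add_cancel (v i) w

theorem apply_mem_sup_of_mem_LMN (hv : v ∈ LMN M N k)
    (i : Fin k) : v i ∈ M ⊔ N := by
  obtain ⟨w, hw, hM, -⟩ := mem_LMN.1 hv
  exact Submodule.mem_sup.2 ⟨v i - w, hM i, w, hw, sub_add_cancel (v i) w⟩

theorem mem_LsubM_of_mem_LMN_of_apply_eq_zero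
    (hv : v ∈ LMN M N k) {j : Fin k} (hj : v j = 0) : v ∈ LsubM M N k := by
  obtain ⟨w, hwN, hM, hsum⟩ := mem_LMN.1 hv
  have hwM : w ∈ M := by simpa [hj] using hM j
  refine ⟨fun i => by simpa using M.add_mem (hM i) hwM, ?_⟩
  rw [Finset.sum_sub_distrib, Finset.sum_const] at hsum
  exact ((M ⊓ N).sub_mem_iff_left ((M ⊓ N).nsmul_mem ⟨hwM, hwN⟩ _)).1 hsum

end Membership

section Evenness

theorem IsEvenLat.sup {A B : Submodule ℤ V} (hA : IsEvenLat A) (hB : IsEvenLat B)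
    (hAB : ∀ a ∈ A, ∀ b ∈ B, ∃ n : ℤ, ⟪a, b⟫ = (n : ℝ)) : IsEvenLat (A ⊔ B) := by
  constructor
  · intro x hx y hy
    obtain ⟨a, ha, b, hb, rfl⟩ := Submodule.mem_sup.1 hx
    obtain ⟨c, hc, d, hd, rfl⟩ := Submodule.mem_sup.1 hy
    obtain ⟨n₁, h₁⟩ := hA.1 a ha c hc
    obtain ⟨n₂, h₂⟩ := hAB a ha d hd
    obtain ⟨n₃, h₃⟩ := hAB c hc b hb
    obtain ⟨n₄, h₄⟩ := hB.1 b hb d hd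
    refine ⟨n₁ + n₂ + (n₃ + n₄), ?_⟩
    rw [inner_add_left, inner_add_right, inner_add_right, real_inner_comm c b, h₁, h₂, h₃, h₄]
    push_cast
    ring
  · intro x hx
    obtain ⟨a, ha, b, hb, rfl⟩ := Submodule.mem_sup.1 hx
    obtain ⟨n₁, h₁⟩ := hA.2 a ha
    obtain ⟨n₂, h₂⟩ := hAB a ha b hb
    obtain ⟨n₃, h₃⟩ := hB.2 b hb
    refine ⟨n₁ + n₂ + n₃, ?_⟩
    rw [real_inner_add_add_self, h₁, h₂, h₃]
    push_cast
    ring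

theorem IsEvenLat.LsubM (hM : IsEvenLat M) : IsEvenLat (LsubM M N k) := by
  constructor
  · intro f hf g hg
    choose n hn using fun i => hM.1 (f i) (hf.1 i) (g i) (hg.1 i)
    exact ⟨∑ i, n i, by simp only [PiLp.inner_apply, hn, Int.cast_sum]⟩
  · intro f hf
    choose n hn using fun i => hM.2 (f i) (hf.1 i)
    exact ⟨∑ i, n i, by simp only [PiLp.inner_apply, hn, Int.cast_sum, Finset.mul_sum]⟩

theorem inner_eq_inner_sum_of_forall_apply_eq {y : V} (f : PiLp 2 fun _ : Fin k => V)
    {g : PiLp 2 fun _ : Fin k => V} (hg : ∀ i, g i = y) : ⟪f, g⟫ = ⟪∑ i, f i, y⟫ := by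
  simp only [PiLp.inner_apply, hg, sum_inner]

theorem IsEvenLat.LsupN (hN : IsEvenLat N) : IsEvenLat (LsupN N k) := by
  constructor
  · rintro f ⟨y, hy, hf⟩ g ⟨z, hz, hg⟩
    rw [inner_eq_inner_sum_of_forall_apply_eq f hg]
    exact hN.1 _ (N.sum_mem fun i _ => hf i ▸ hy) z hz
  · rintro f ⟨y, hy, hf⟩
    obtain ⟨n, hn⟩ := hN.2 y hy
    refine ⟨k * n, ?_⟩
    simp only [PiLp.inner_apply, hf, hn, Finset.sum_const, Finset.card_univ, Fintype.card_fin,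
      nsmul_eq_mul]
    push_cast
    ring

theorem IsEvenLat.LMN (hM : IsEvenLat M) (hN : IsEvenLat N) : IsEvenLat (LMN M N k) := by
  refine hM.LsubM.sup hN.LsupN ?_
  rintro f hf g ⟨y, hy, hg⟩
  rw [inner_eq_inner_sum_of_forall_apply_eq f hg]
  exact hN.1 _ hf.2.2 y hy

end Evenness

section LowerBound

theorem four_le_inner_self_of_mem_LsubM (hΥ : ∀ u ∈ Υ, u ≠ 0 → 1 ≤ ⟪u, u⟫)
    (hinf : M ⊓ N ≤ (2 : ℤ) • Υ) (hM : IsEvenLat M) {v : PiLp 2 fun _ : Fin k => V}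
    (hv : v ∈ LsubM M N k) (hv0 : v ≠ 0) : 4 ≤ ⟪v, v⟫ := by
  have hnonneg : ∀ i ∈ Finset.univ, 0 ≤ ⟪v i, v i⟫ := fun _ _ => real_inner_self_nonneg
  obtain ⟨i, hi⟩ : ∃ i, v i ≠ 0 := by
    by_contra! h
    exact hv0 (PiLp.ext h)
  rw [PiLp.inner_apply]
  by_cases hother : ∃ j ≠ i, v j ≠ 0
  · obtain ⟨j, hji, hj⟩ := hother
    have hpair := Finset.add_le_sum hnonneg (Finset.mem_univ i) (Finset.mem_univ j) hji.symm
    linarith [hM.two_le_inner_self (hv.1 i) hi, hM.two_le_inner_self (hv.1 j) hj]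
  · push Not at hother
    have hsum : ∑ j, v j = v i :=
      Finset.sum_eq_single i (fun j _ hji => hother j hji) (by simp)
    have hmem : v i ∈ (2 : ℤ) • Υ := hinf (hsum ▸ hv.2)
    exact (four_le_inner_self_of_mem_two_smul hΥ hmem hi).trans
      (Finset.single_le_sum hnonneg (Finset.mem_univ i))

theorem natCast_le_inner_self_of_forall_one_le {v : PiLp 2 fun _ : Fin k => V}
    (hv : ∀ i, 1 ≤ ⟪v i, v i⟫) : (k : ℝ) ≤ ⟪v, v⟫ := by
  rw [PiLp.inner_apply]
  simpa using Finset.card_nsmul_le_sum Finset.univ _ 1 fun i _ => hv i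

theorem four_le_inner_self_of_mem_LMN (hk : 3 ≤ k) (hΥ : ∀ u ∈ Υ, u ≠ 0 → 1 ≤ ⟪u, u⟫)
    (hsup : M ⊔ N ≤ Υ) (hinf : M ⊓ N ≤ (2 : ℤ) • Υ) (hM : IsEvenLat M) (hN : IsEvenLat N)
    {v : PiLp 2 fun _ : Fin k => V} (hv : v ∈ LMN M N k) (hv0 : v ≠ 0) : 4 ≤ ⟪v, v⟫ := by
  by_cases hzero : ∃ j, v j = 0
  · obtain ⟨j, hj⟩ := hzero
    exact four_le_inner_self_of_mem_LsubM hΥ hinf hM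
      (mem_LsubM_of_mem_LMN_of_apply_eq_zero hv hj) hv0
  · push Not at hzero
    have hk_le : (k : ℝ) ≤ ⟪v, v⟫ := natCast_le_inner_self_of_forall_one_le fun i =>
      hΥ (v i) (hsup (apply_mem_sup_of_mem_LMN hv i)) (hzero i)
    obtain ⟨n, hn⟩ := (hM.LMN hN).2 v hv
    rw [hn] at hk_le ⊢
    have : (k : ℤ) ≤ 2 * n := by exact_mod_cast hk_le
    exact_mod_cast (by omega : 4 ≤ 2 * n)

end LowerBound

section UpperBound

omit [InnerProductSpace ℝ V] in
theorem single_sub_single_mem_LMN {x : V} (hx : x ∈ M) (i j : Fin k) :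
    (PiLp.single 2 i x - PiLp.single 2 j x : PiLp 2 fun _ : Fin k => V) ∈ LMN M N k := by
  refine Submodule.mem_sup_left ⟨fun l => ?_, ?_⟩
  · have hsingle (m : Fin k) : (PiLp.single 2 m x : PiLp 2 fun _ : Fin k => V) l ∈ M := by
      rw [PiLp.single_apply]
      split_ifs
      exacts [hx, M.zero_mem]
    exact M.sub_mem (hsingle i) (hsingle j)
  · simp

theorem inner_piLp_single_left {ι : Type*} [Fintype ι] [DecidableEq ι] (i : ι) (x : V)
    (v : PiLp 2 fun _ : ι => V) : ⟪PiLp.single 2 i x, v⟫ = ⟪x, v i⟫ := by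
  rw [PiLp.inner_apply, Finset.sum_eq_single i] <;> simp +contextual

theorem inner_self_single_sub_single {ι : Type*} [Fintype ι] [DecidableEq ι] {i j : ι}
    (hij : i ≠ j) (x : V) :
    ⟪(PiLp.single 2 i x - PiLp.single 2 j x : PiLp 2 fun _ : ι => V),
      PiLp.single 2 i x - PiLp.single 2 j x⟫ = 2 * ⟪x, x⟫ := by
  rw [inner_sub_left, inner_piLp_single_left, inner_piLp_single_left]
  simp only [PiLp.sub_apply, PiLp.single_eq_same, PiLp.single_eq_of_ne 2 hij,
    PiLp.single_eq_of_ne 2 hij.symm, inner_sub_right, inner_zero_right]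
  ring

theorem exists_mem_LMN_inner_self_eq_two_mul (hk : 2 ≤ k) {x : V} (hx : x ∈ M) (hx0 : x ≠ 0) :
    ∃ v ∈ LMN M N k, v ≠ 0 ∧ ⟪v, v⟫ = 2 * ⟪x, x⟫ := by
  have : Nontrivial (Fin k) := Fin.nontrivial_iff_two_le.2 hk
  obtain ⟨i, j, hij⟩ := exists_pair_ne (Fin k)
  have hnorm := inner_self_single_sub_single hij x
  refine ⟨_, single_sub_single_mem_LMN hx i j, ?_, hnorm⟩
  rw [← inner_self_ne_zero (𝕜 := ℝ), hnorm]
  exact mul_ne_zero two_ne_zero (inner_self_ne_zero.2 hx0)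

theorem LMN_ne_bot (hk : 2 ≤ k) (hM : M ≠ ⊥) : LMN M N k ≠ ⊥ := by
  obtain ⟨x, hx, hx0⟩ := M.exists_mem_ne_zero_of_ne_bot hM
  obtain ⟨v, hv, hv0, -⟩ := exists_mem_LMN_inner_self_eq_two_mul (N := N) hk hx hx0
  exact (LMN M N k).ne_bot_iff.2 ⟨v, hv, hv0⟩

theorem minNorm_LMN_le_two_mul_minNorm (hk : 2 ≤ k) (hM : M ≠ ⊥) :
    minNorm (LMN M N k) ≤ 2 * minNorm M := by
  rw [← div_le_iff₀' two_pos]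
  refine le_minNorm hM fun x hx hx0 => ?_
  obtain ⟨v, hv, hv0, hnorm⟩ := exists_mem_LMN_inner_self_eq_two_mul (N := N) hk hx hx0
  rw [div_le_iff₀' two_pos, ← hnorm]
  exact minNorm_le_inner_self hv hv0

end UpperBound

theorem statement8_general (hk : 3 ≤ k) (hΥ : ∀ u ∈ Υ, u ≠ 0 → 1 ≤ ⟪u, u⟫)
    (hsup : M ⊔ N ≤ Υ) (hinf : M ⊓ N ≤ (2 : ℤ) • Υ) (hM : IsEvenLat M) (hM0 : M ≠ ⊥)
    (hN : IsEvenLat N) :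
    4 ≤ minNorm (LMN M N k) ∧ (minNorm M = 2 → minNorm (LMN M N k) = 4) := by
  have hk2 : 2 ≤ k := Nat.le_of_succ_le hk
  have hlower : 4 ≤ minNorm (LMN M N k) := le_minNorm (LMN_ne_bot hk2 hM0) fun _ hv hv0 =>
    four_le_inner_self_of_mem_LMN hk hΥ hsup hinf hM hN hv hv0
  refine ⟨hlower, fun hmin => hlower.antisymm' ?_⟩
  linarith [minNorm_LMN_le_two_mul_minNorm (N := N) hk2 hM0]

/-- for a polarization of `Υ` by Niemeier lattices `M, N`:
(i) `μ(L(M,N,3)) ≥ 4`; (ii) if `μ(M) = 2` then `μ(L(M,N,3)) = 4`. -/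
theorem statement8 [FiniteDimensional ℝ V] (hdim : finrank ℝ V = 24)
    (Υ M N : Submodule ℤ V) (hΥlat : IsLat Υ) (hΥ : SqrtTwoEvenUnimod Υ)
    (hpol : IsPolarization Υ M N)
    (hM : IsLat M ∧ IsEvenLat M ∧ IsUnimodularLat M)
    (hN : IsLat N ∧ IsEvenLat N ∧ IsUnimodularLat N) :
    4 ≤ minNorm (LMN M N 3) ∧ (minNorm M = 2 → minNorm (LMN M N 3) = 4) := by
  have : Nontrivial V := nontrivial_of_finrank_pos (R := ℝ) (by omega)
  obtain ⟨-, -, -, -, hsup, hinf⟩ := hpol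
  exact statement8_general le_rfl (fun u hu => one_le_inner_self_of_eq_intCast (hΥ.1 u hu))
    hsup.le hinf.le hM.2.1 hM.1.ne_bot hN.2.1
end
end

section
/- Let V be a 24-dimensional real inner product space, Υ a lattice in V such that √2·Υ is even and unimodular, and M, N a polarization of Υ in which M and N are both even unimodular lattices (Niemeier lattices). If μ(L(M,N,3)) = 8, then μ(M) = 4 and μ(N) = 4 (i.e. both M and N are Leech lattices). -/
noncomputable section

open scoped RealInnerProductSpace Pointwise
open Module

variable {V : Type*} [NormedAddCommGroup V] [InnerProductSpace ℝ V]

/-!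
For nonzero `x ∈ M` and `y ∈ N` the lattice `L(M,N,k)` contains `(x, -x, 0, …, 0)` and
`(y, …, y)`, of norms `2⟪x,x⟫` and `k⟪y,y⟫`. Hence a large `μ(L(M,N,k))` excludes vectors of
norm 2 from `M` and `N`, and by evenness both have minimum at least 4. The minimum cannot be 6 or
more by Blichfeldt's argument: if it were, a point would lie in at most three of the balls of
radius `√2` about the lattice points, so such a ball would have volume at most 3, whereas in
dimension 24 its volume `2¹² π¹² / 12!` is about 7.9.
-/

section Blichfeldt

open MeasureTheory Metric ZLattice

theorem measure_le_mul_of_encard_le {E L : Type*} [MeasurableSpace E] {μ : Measure E} {F s : Set E}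
    [AddGroup L] [Countable L] [AddAction L E] [MeasurableSpace L] [MeasurableVAdd L E]
    [VAddInvariantMeasure L E μ] (fund : IsAddFundamentalDomain L F μ) (hs : NullMeasurableSet s μ)
    {m : ℕ∞} (h : ∀ x, {g : L | x ∈ g +ᵥ s}.encard ≤ m) : μ s ≤ m * μ F := by
  have hg (g : L) : NullMeasurableSet (g +ᵥ s) (μ.restrict F) :=
    (hs.vadd g).mono_ac Measure.restrict_le_self.absolutelyContinuous
  have hcount (x : E) :
      ∑' g : L, (g +ᵥ s).indicator 1 x = ({g : L | x ∈ g +ᵥ s}.encard : ENNReal) := by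
    rw [← ENNReal.tsum_set_one, tsum_subtype _ fun _ ↦ (1 : ENNReal)]
    rfl
  calc μ s = ∑' g : L, μ ((g +ᵥ s) ∩ F) := fund.measure_eq_tsum s
    _ = ∑' g : L, ∫⁻ x in F, (g +ᵥ s).indicator 1 x ∂μ := by
      simp_rw [lintegral_indicator_one₀ (hg _), Measure.restrict_apply₀ (hg _)]
    _ = ∫⁻ x in F, ∑' g : L, (g +ᵥ s).indicator 1 x ∂μ :=
      (lintegral_tsum fun g ↦ aemeasurable_const.indicator₀ (hg g)).symm
    _ ≤ ∫⁻ _ in F, m ∂μ := lintegral_mono fun x ↦ by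
      rw [hcount]
      exact ENat.toENNReal_mono (h x)
    _ = m * μ F := setLIntegral_const F _

theorem sum_sum_norm_sub_sq {ι : Type*} (s : Finset ι) (f : ι → V) :
    ∑ i ∈ s, ∑ j ∈ s, ‖f i - f j‖ ^ 2 =
      2 * s.card * ∑ i ∈ s, ‖f i‖ ^ 2 - 2 * ‖∑ i ∈ s, f i‖ ^ 2 := by
  have hinner : ‖∑ i ∈ s, f i‖ ^ 2 = ∑ i ∈ s, ∑ j ∈ s, ⟪f i, f j⟫ := by
    simp_rw [← real_inner_self_eq_norm_sq, sum_inner, inner_sum]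
  simp_rw [hinner, norm_sub_sq_real, Finset.sum_add_distrib, Finset.sum_sub_distrib,
    Finset.sum_const, nsmul_eq_mul, ← Finset.mul_sum]
  ring

theorem card_sub_one_mul_lt_of_pairwise_le_norm_sub_sq {ι : Type*} {s : Finset ι}
    (hs : s.Nonempty) {f : ι → V} {c : V} {R D : ℝ} (hR : ∀ i ∈ s, ‖f i - c‖ ^ 2 < R)
    (hD : (s : Set ι).Pairwise fun i j ↦ D ≤ ‖f i - f j‖ ^ 2) :
    (s.card - 1) * D < 2 * s.card * R := by
  classical
  have hcard : (0 : ℝ) < s.card := by exact_mod_cast hs.card_pos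
  have hrow (i : ι) (hi : i ∈ s) : (s.card - 1) * D ≤ ∑ j ∈ s, ‖f i - f j‖ ^ 2 := by
    rw [← Finset.add_sum_erase s _ hi, sub_self, norm_zero, zero_pow two_ne_zero, zero_add,
      ← Finset.cast_card_erase_of_mem hi, ← nsmul_eq_mul]
    refine Finset.card_nsmul_le_sum _ _ _ fun j hj ↦ ?_
    exact hD hi (Finset.mem_of_mem_erase hj) (Finset.ne_of_mem_erase hj).symm
  refine lt_of_mul_lt_mul_left ?_ hcard.le
  calc s.card * ((s.card - 1) * D) ≤ ∑ i ∈ s, ∑ j ∈ s, ‖f i - f j‖ ^ 2 := by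
        simpa only [nsmul_eq_mul] using Finset.card_nsmul_le_sum s _ _ hrow
    _ = ∑ i ∈ s, ∑ j ∈ s, ‖(f i - c) - (f j - c)‖ ^ 2 := by simp_rw [sub_sub_sub_cancel_right]
    _ ≤ 2 * s.card * ∑ i ∈ s, ‖f i - c‖ ^ 2 := by
        rw [sum_sum_norm_sub_sq s fun i ↦ f i - c]
        exact sub_le_self _ (by positivity)
    _ < 2 * s.card * (s.card * R) := by
        gcongr
        simpa only [Finset.sum_const, nsmul_eq_mul] using Finset.sum_lt_sum_of_nonempty hs hR
    _ = s.card * (2 * s.card * R) := by ring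

theorem encard_le_of_pairwise_le_norm_sub_sq {ι : Type*} {S : Set ι} {f : ι → V} {c : V}
    {R D : ℝ} {m : ℕ} (hm : 2 * (m + 1) * R ≤ m * D) (hR : ∀ i ∈ S, ‖f i - c‖ ^ 2 < R)
    (hD : S.Pairwise fun i j ↦ D ≤ ‖f i - f j‖ ^ 2) : S.encard ≤ m := by
  by_contra! hlt
  obtain ⟨T, hTS, hT⟩ := Set.exists_subset_encard_eq (Order.add_one_le_of_lt hlt)
  obtain ⟨s, rfl⟩ := (Set.finite_of_encard_eq_coe (k := m + 1) hT).exists_finset_coe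
  have hcard : s.card = m + 1 := by
    rw [Set.encard_coe_eq_coe_finsetCard] at hT
    exact_mod_cast hT
  have h := card_sub_one_mul_lt_of_pairwise_le_norm_sub_sq (Finset.card_pos.mp (by lia))
    (fun i hi ↦ hR i (hTS hi)) (hD.mono hTS)
  rw [hcard, Nat.cast_succ, add_sub_cancel_right] at h
  exact h.not_ge hm

variable [FiniteDimensional ℝ V] [MeasurableSpace V] [BorelSpace V]

theorem measureReal_ball_le_mul_covolume (L : Submodule ℤ V) [DiscreteTopology L] [IsZLattice ℝ L]
    (μ : Measure V) [μ.IsAddHaarMeasure] {r D : ℝ} {m : ℕ} (hm : 2 * (m + 1) * r ^ 2 ≤ m * D)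
    (hD : ∀ x ∈ L, x ≠ 0 → D ≤ ‖x‖ ^ 2) : μ.real (ball 0 r) ≤ m * covolume L μ := by
  have : MeasurableVAdd L V := inferInstanceAs (MeasurableVAdd L.toAddSubgroup V)
  have : VAddInvariantMeasure L V μ := inferInstanceAs (VAddInvariantMeasure L.toAddSubgroup V μ)
  let b := Free.chooseBasis ℤ L
  have hcover (x : V) : {g : L | x ∈ g +ᵥ ball (0 : V) r}.encard ≤ (m : ℕ∞) := by
    refine encard_le_of_pairwise_le_norm_sub_sq (f := Subtype.val) (c := x) hm ?_ ?_
    · rintro g ⟨y, hy, rfl⟩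
      rw [mem_ball_zero_iff] at hy
      simpa [Submodule.vadd_def] using pow_lt_pow_left₀ hy (norm_nonneg y) two_ne_zero
    · exact fun g _ h _ hgh ↦
        hD _ (L.sub_mem g.2 h.2) (sub_ne_zero.mpr (Subtype.coe_injective.ne hgh))
  have hle := measure_le_mul_of_encard_le (isAddFundamentalDomain b μ)
    measurableSet_ball.nullMeasurableSet hcover
  rw [covolume_eq_measure_fundamentalDomain L μ (isAddFundamentalDomain b μ)]
  have hfin : μ (ZSpan.fundamentalDomain (b.ofZLatticeBasis ℝ)) ≠ ⊤ :=
    (ZSpan.fundamentalDomain_isBounded _).measure_lt_top.ne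
  simpa [measureReal_def] using
    ENNReal.toReal_mono (ENNReal.mul_ne_top (ENNReal.natCast_ne_top m) hfin) hle

theorem covolume_sq_eq_det_gram (L : Submodule ℤ V) [DiscreteTopology L] [IsZLattice ℝ L]
    {ι : Type*} [Fintype ι] [DecidableEq ι] (b : Basis ι ℤ L) :
    covolume L ^ 2 = (Matrix.gram ℝ fun i ↦ (b i : V)).det := by
  have hcard : Fintype.card (Fin (finrank ℝ V)) = Fintype.card ι := by
    rw [Fintype.card_fin, finrank_eq_card_basis (b.ofZLatticeBasis ℝ)]
  let o := (stdOrthonormalBasis ℝ V).reindex (Fintype.equivOfCardEq hcard)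
  have hcube : volume.real (ZSpan.fundamentalDomain o.toBasis) = 1 := by
    rw [measureReal_congr (ZSpan.fundamentalDomain_ae_parallelepiped _ _), measureReal_def,
      OrthonormalBasis.coe_toBasis, o.volume_parallelepiped, ENNReal.toReal_one]
  rw [covolume_eq_det_mul_measureReal L volume b o.toBasis, hcube, mul_one, sq_abs,
    Matrix.gram_eq_conjTranspose_mul o, Matrix.det_mul, Matrix.det_conjTranspose, star_trivial,
    ← sq]
  rfl

theorem three_lt_volume_ball_sqrt_two (hdim : finrank ℝ V = 24) :
    3 < volume.real (ball (0 : V) √2) := by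
  have : Nontrivial V := nontrivial_of_finrank_pos (R := ℝ) (by lia)
  have hsqrt : √2 ^ 24 = (2 : ℝ) ^ 12 := by
    rw [pow_mul _ 2 12, Real.sq_sqrt zero_le_two]
  rw [measureReal_def, InnerProductSpace.volume_ball_of_dim_even (k := 12) hdim, hdim,
    ENNReal.toReal_mul, ENNReal.toReal_pow, ENNReal.toReal_ofReal (Real.sqrt_nonneg 2),
    ENNReal.toReal_ofReal (by positivity), hsqrt]
  calc (3 : ℝ) < 2 ^ 12 * (3 ^ 12 / (12).factorial) := by norm_num [Nat.factorial]
    _ < _ := by gcongr; exact Real.pi_gt_three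

theorem exists_ne_zero_norm_sq_lt_six (hdim : finrank ℝ V = 24) (L : Submodule ℤ V)
    [DiscreteTopology L] [IsZLattice ℝ L] (hL : covolume L ≤ 1) :
    ∃ x ∈ L, x ≠ 0 ∧ ‖x‖ ^ 2 < 6 := by
  by_contra! hsix
  have hle := measureReal_ball_le_mul_covolume L volume (r := √2) (m := 3)
    (by rw [Real.sq_sqrt zero_le_two]; norm_num) hsix
  have hlt := three_lt_volume_ball_sqrt_two hdim
  push_cast at hle
  linarith

end Blichfeldt

section EvenUnimodular

variable {L : Submodule ℤ V}

theorem IsIntegralLat.one_le_inner_self (hL : IsIntegralLat L) {x : V} (hx : x ∈ L) (hx0 : x ≠ 0) :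
    1 ≤ ⟪x, x⟫ := by
  obtain ⟨n, hn⟩ := hL x hx x hx
  have hpos := real_inner_self_pos.mpr hx0
  rw [hn] at hpos ⊢
  exact_mod_cast hpos

theorem IsIntegralLat.discreteTopology (hL : IsIntegralLat L) : DiscreteTopology L := by
  refine discreteTopology_of_isOpen_singleton_zero (Metric.isOpen_singleton_iff.mpr ?_)
  refine ⟨1, one_pos, fun x hx ↦ ?_⟩
  by_contra hx0
  have hone := hL.one_le_inner_self x.2 (by simpa using hx0)
  rw [dist_zero_right, Submodule.coe_norm] at hx
  rw [real_inner_self_eq_norm_sq] at hone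
  exact hone.not_gt (pow_lt_one₀ (norm_nonneg _) hx two_ne_zero)

theorem IsUnimodularLat.covolume_eq_one [FiniteDimensional ℝ V] [MeasurableSpace V] [BorelSpace V]
    [DiscreteTopology L] [IsZLattice ℝ L] (hL : IsUnimodularLat L) : ZLattice.covolume L = 1 := by
  obtain ⟨n, b, hb⟩ := hL
  have hsq : ZLattice.covolume L ^ 2 = 1 := (covolume_sq_eq_det_gram L b).trans hb
  exact (pow_eq_one_iff_of_nonneg (ZLattice.covolume_pos L).le two_ne_zero).mp hsq

theorem IsEvenLat.add_two_le_inner_self (hL : IsEvenLat L) {x : V} (hx : x ∈ L) {k : ℤ}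
    (hk : 2 * k < ⟪x, x⟫) : 2 * k + 2 ≤ ⟪x, x⟫ := by
  obtain ⟨n, hn⟩ := hL.2 x hx
  rw [hn] at hk ⊢
  norm_cast at hk ⊢
  lia

theorem minNorm_le {x : V} (hx : x ∈ L) (hx0 : x ≠ 0) : minNorm L ≤ ⟪x, x⟫ := by
  refine csInf_le ⟨0, ?_⟩ ⟨x, hx, hx0, rfl⟩
  rintro _ ⟨y, -, -, rfl⟩
  exact real_inner_self_nonneg

theorem exists_ne_zero_inner_self_lt_six (hdim : finrank ℝ V = 24) (hlat : IsLat L)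
    (hint : IsIntegralLat L) (huni : IsUnimodularLat L) : ∃ x ∈ L, x ≠ 0 ∧ ⟪x, x⟫ < 6 := by
  have : FiniteDimensional ℝ V := .of_finrank_pos (by lia)
  have : DiscreteTopology L := hint.discreteTopology
  have : IsZLattice ℝ L := ⟨hlat.2⟩
  borelize V
  simpa only [real_inner_self_eq_norm_sq] using
    exists_ne_zero_norm_sq_lt_six hdim L huni.covolume_eq_one.le

theorem minNorm_eq_four (hdim : finrank ℝ V = 24)
    (hL : IsLat L ∧ IsEvenLat L ∧ IsUnimodularLat L) (hroot : ∀ x ∈ L, x ≠ 0 → 2 < ⟪x, x⟫) :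
    minNorm L = 4 := by
  obtain ⟨hlat, heven, huni⟩ := hL
  have hfour : ∀ x ∈ L, x ≠ 0 → 4 ≤ ⟪x, x⟫ := fun x hx hx0 ↦ by
    have hle := heven.add_two_le_inner_self hx (k := 1) (by simpa using hroot x hx hx0)
    push_cast at hle
    linarith
  obtain ⟨x, hx, hx0, hx6⟩ := exists_ne_zero_inner_self_lt_six hdim hlat heven.1 huni
  have hx4 : ⟪x, x⟫ ≤ 4 := by
    by_contra! hlt
    have hle := heven.add_two_le_inner_self hx (k := 2) (by push_cast; linarith)
    push_cast at hle
    linarith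
  refine IsLeast.csInf_eq ⟨⟨x, hx, hx0, hx4.antisymm (hfour x hx hx0)⟩, ?_⟩
  rintro _ ⟨y, hy, hy0, rfl⟩
  exact hfour y hy hy0

end EvenUnimodular

section Construction

variable {M N : Submodule ℤ V} {k : ℕ}

theorem minNorm_LMN_le_two_mul (hk : 2 ≤ k) {x : V} (hx : x ∈ M) (hx0 : x ≠ 0) :
    minNorm (LMN M N k) ≤ 2 * ⟪x, x⟫ := by
  obtain ⟨i, j, hij⟩ := (Fin.nontrivial_iff_two_le.mpr hk).exists_pair_ne
  let v : PiLp 2 fun _ : Fin k ↦ V := PiLp.single 2 i x - PiLp.single 2 j x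
  have hsingle (i l : Fin k) : (PiLp.single 2 i x : PiLp 2 fun _ : Fin k ↦ V) l ∈ M := by
    rcases eq_or_ne l i with rfl | hli
    · rwa [PiLp.single_eq_same]
    · rw [PiLp.single_eq_of_ne _ hli]
      exact M.zero_mem
  have hv : v ∈ LMN M N k := by
    refine Submodule.mem_sup_left ⟨fun l ↦ M.sub_mem (hsingle i l) (hsingle j l), ?_⟩
    simp [v]
  have hv0 : v ≠ 0 := fun h ↦ hx0 <| by simpa [v, hij] using congr($h i)
  have horth : ⟪(PiLp.single 2 i x : PiLp 2 fun _ : Fin k ↦ V), PiLp.single 2 j x⟫ = 0 := by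
    rw [PiLp.inner_apply]
    refine Finset.sum_eq_zero fun l _ ↦ ?_
    rcases eq_or_ne l i with rfl | hli
    · rw [PiLp.single_eq_of_ne _ hij, inner_zero_right]
    · rw [PiLp.single_eq_of_ne _ hli, inner_zero_left]
  have hnorm : ⟪v, v⟫ = 2 * ⟪x, x⟫ := by
    simp_rw [v, real_inner_self_eq_norm_sq, norm_sub_sq_real, horth, PiLp.norm_single]
    ring
  exact hnorm ▸ minNorm_le hv hv0

theorem minNorm_LMN_le_mul (hk : 0 < k) {y : V} (hy : y ∈ N) (hy0 : y ≠ 0) :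
    minNorm (LMN M N k) ≤ k * ⟪y, y⟫ := by
  let v : PiLp 2 fun _ : Fin k ↦ V := WithLp.toLp 2 fun _ ↦ y
  have hv : v ∈ LMN M N k := Submodule.mem_sup_right ⟨y, hy, fun _ ↦ rfl⟩
  have hv0 : v ≠ 0 := fun h ↦ hy0 congr($h ⟨0, hk⟩)
  have hnorm : ⟪v, v⟫ = k * ⟪y, y⟫ := by
    simp only [v, PiLp.inner_apply, Finset.sum_const, Finset.card_univ, Fintype.card_fin,
      nsmul_eq_mul]
  exact hnorm ▸ minNorm_le hv hv0

theorem minNorm_left_eq_four (hdim : finrank ℝ V = 24)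
    (hM : IsLat M ∧ IsEvenLat M ∧ IsUnimodularLat M) (hk : 2 ≤ k)
    (hμ : 4 < minNorm (LMN M N k)) : minNorm M = 4 :=
  minNorm_eq_four hdim hM fun x hx hx0 ↦ by
    linarith [minNorm_LMN_le_two_mul (N := N) hk hx hx0]

theorem minNorm_right_eq_four (hdim : finrank ℝ V = 24)
    (hN : IsLat N ∧ IsEvenLat N ∧ IsUnimodularLat N) (hk : 0 < k)
    (hμ : 2 * k < minNorm (LMN M N k)) : minNorm N = 4 :=
  minNorm_eq_four hdim hN fun y hy hy0 ↦ by
    have hlt := hμ.trans_le (minNorm_LMN_le_mul hk hy hy0)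
    rw [mul_comm] at hlt
    exact lt_of_mul_lt_mul_left hlt k.cast_nonneg

end Construction

theorem statement11_general (hdim : finrank ℝ V = 24) {M N : Submodule ℤ V}
    (hM : IsLat M ∧ IsEvenLat M ∧ IsUnimodularLat M)
    (hN : IsLat N ∧ IsEvenLat N ∧ IsUnimodularLat N) {k : ℕ} (hk : 2 ≤ k)
    (hμ : 2 * k < minNorm (LMN M N k)) : minNorm M = 4 ∧ minNorm N = 4 := by
  have hk' : (2 : ℝ) ≤ k := by exact_mod_cast hk
  exact ⟨minNorm_left_eq_four hdim hM hk (by linarith),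
    minNorm_right_eq_four hdim hN (by lia) hμ⟩

/-- if `μ(L(M,N,3)) = 8` then both `M` and `N` are Leech lattices, i.e.
`μ(M) = μ(N) = 4`. -/
theorem statement11 [FiniteDimensional ℝ V] (hdim : finrank ℝ V = 24)
    (Υ M N : Submodule ℤ V) (hΥlat : IsLat Υ) (hΥ : SqrtTwoEvenUnimod Υ)
    (hpol : IsPolarization Υ M N)
    (hM : IsLat M ∧ IsEvenLat M ∧ IsUnimodularLat M)
    (hN : IsLat N ∧ IsEvenLat N ∧ IsUnimodularLat N)
    (h8 : minNorm (LMN M N 3) = 8) :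
    minNorm M = 4 ∧ minNorm N = 4 :=
  statement11_general hdim hM hN (by norm_num : 2 ≤ 3) (by rw [h8]; norm_num)
end
end

section
/- In the Leech polarization setup, let (w,x,y,z) be an offender. Then the three roots w+x, w+y, w+z are pairwise orthogonal: ⟪w+x, w+y⟫ = ⟪w+x, w+z⟫ = ⟪w+y, w+z⟫ = 0. -/
noncomputable section

open scoped RealInnerProductSpace Pointwise
open Module

variable {V : Type*} [NormedAddCommGroup V] [InnerProductSpace ℝ V]

/-!
Two roots `a`, `b` of norm `2` are orthogonal as soon as `a - b` and `a + b` both have norm at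
least `4`. For `a = w + x` and `b = w + y` these vectors are `x - y` and `2w + (x + y)`, which lie
in `M` because `2N ⊆ M`. Each of them vanishes only if `x + y` lies in `M ∩ N`, since `2y` and `2w`
do. But then `z` would lie in `N` along with `x + y + z`, making `w + z` a root of `N`.
-/

lemma minNorm_le_inner_self_s13 {L : Submodule ℤ V} {v : V} (hv : v ∈ L) (h0 : v ≠ 0) :
    minNorm L ≤ ⟪v, v⟫ := by
  refine csInf_le ⟨0, ?_⟩ ⟨v, hv, h0, rfl⟩
  rintro r ⟨u, -, -, rfl⟩
  exact real_inner_self_nonneg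

lemma inner_self_ne_of_lt_minNorm {L : Submodule ℤ V} {r : ℝ} (hr0 : r ≠ 0) (hr : r < minNorm L)
    {v : V} (hv : v ∈ L) : ⟪v, v⟫ ≠ r := by
  rintro rfl
  exact hr.not_ge (minNorm_le_inner_self_s13 hv (inner_self_ne_zero.mp hr0))

lemma real_inner_eq_zero_of_add_le_inner_self {E : Type*} [SeminormedAddCommGroup E]
    [InnerProductSpace ℝ E] {a b : E}
    (hsub : ⟪a, a⟫ + ⟪b, b⟫ ≤ ⟪a - b, a - b⟫) (hadd : ⟪a, a⟫ + ⟪b, b⟫ ≤ ⟪a + b, a + b⟫) :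
    ⟪a, b⟫ = 0 := by
  rw [real_inner_sub_sub_self] at hsub
  rw [real_inner_add_add_self] at hadd
  linarith

lemma two_zsmul_mem_inf {A : Type*} [AddCommGroup A] {M N : Submodule ℤ A}
    (h2 : (2 : ℤ) • (M ⊔ N) ≤ M ⊓ N) {v : A} (hv : v ∈ M ⊔ N) : (2 : ℤ) • v ∈ M ⊓ N :=
  h2 (Submodule.smul_mem_pointwise_smul v 2 _ hv)

section Offenders

variable {M N : Submodule ℤ V} {w x y z : V}

namespace Admissible

omit [InnerProductSpace ℝ V]

lemma swap_right (h : Admissible M N w x y z) : Admissible M N w x z y := by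
  obtain ⟨hw, hx, hy, hz, hsum⟩ := h
  exact ⟨hw, hx, hz, hy, by rwa [add_right_comm]⟩

lemma rotate (h : Admissible M N w x y z) : Admissible M N w y z x := by
  obtain ⟨hw, hx, hy, hz, hsum⟩ := h
  exact ⟨hw, hy, hz, hx, by rwa [add_comm, ← add_assoc]⟩

lemma add_sub_add_mem (h : Admissible M N w x y z) : (w + x) - (w + y) ∈ M := by
  obtain ⟨-, hx, hy, -, -⟩ := h
  simpa only [add_sub_add_left_eq_sub] using M.sub_mem hx hy

lemma add_add_add_mem (h2 : (2 : ℤ) • (M ⊔ N) ≤ M ⊓ N) (h : Admissible M N w x y z) :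
    (w + x) + (w + y) ∈ M := by
  obtain ⟨hw, hx, hy, -, -⟩ := h
  have h2w : (2 : ℤ) • w ∈ M := (two_zsmul_mem_inf h2 (Submodule.mem_sup_right hw)).1
  rw [add_add_add_comm, ← two_zsmul]
  exact M.add_mem h2w (M.add_mem hx hy)

lemma add_sub_add_ne_zero (h2 : (2 : ℤ) • (M ⊔ N) ≤ M ⊓ N) (h : Admissible M N w x y z)
    (hxy : x + y ∉ M ⊓ N) : (w + x) - (w + y) ≠ 0 := by
  obtain ⟨-, hx, -, -, -⟩ := h
  intro h0
  obtain rfl : x = y := add_left_cancel (sub_eq_zero.mp h0)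
  exact hxy (two_zsmul x ▸ two_zsmul_mem_inf h2 (Submodule.mem_sup_left hx))

lemma add_add_add_ne_zero (h2 : (2 : ℤ) • (M ⊔ N) ≤ M ⊓ N) (h : Admissible M N w x y z)
    (hxy : x + y ∉ M ⊓ N) : (w + x) + (w + y) ≠ 0 := by
  obtain ⟨hw, -, -, -, -⟩ := h
  intro h0
  rw [add_add_add_comm, ← two_zsmul] at h0
  rw [← neg_eq_of_add_eq_zero_right h0] at hxy
  exact hxy ((M ⊓ N).neg_mem (two_zsmul_mem_inf h2 (Submodule.mem_sup_right hw)))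

end Admissible

namespace Offender

lemma swap_right (h : Offender M N w x y z) : Offender M N w x z y :=
  ⟨h.1.swap_right, h.2.1, h.2.2.2, h.2.2.1⟩

lemma rotate (h : Offender M N w x y z) : Offender M N w y z x :=
  ⟨h.1.rotate, h.2.2.1, h.2.2.2, h.2.1⟩

lemma add_notMem_inf (hN : ∀ v ∈ N, ⟪v, v⟫ ≠ 2) (h : Offender M N w x y z) :
    x + y ∉ M ⊓ N := by
  obtain ⟨⟨hw, -, -, -, hsum⟩, -, -, hwz⟩ := h
  intro hxy
  have hz : z ∈ N := (((M ⊓ N).add_mem_iff_right hxy).mp hsum).2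
  exact hN (w + z) (N.add_mem hw hz) hwz

lemma inner_add_add_eq_zero (h2 : (2 : ℤ) • (M ⊔ N) ≤ M ⊓ N) (hM : ∀ v ∈ M, v ≠ 0 → 4 ≤ ⟪v, v⟫)
    (hN : ∀ v ∈ N, ⟪v, v⟫ ≠ 2) (h : Offender M N w x y z) : ⟪w + x, w + y⟫ = 0 := by
  have hxy : x + y ∉ M ⊓ N := h.add_notMem_inf hN
  obtain ⟨hadm, hwx, hwy, -⟩ := h
  have hnorm : ⟪w + x, w + x⟫ + ⟪w + y, w + y⟫ = 4 := by rw [hwx, hwy]; norm_num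
  apply real_inner_eq_zero_of_add_le_inner_self
  · exact hnorm.trans_le (hM _ hadm.add_sub_add_mem (hadm.add_sub_add_ne_zero h2 hxy))
  · exact hnorm.trans_le (hM _ (hadm.add_add_add_mem h2) (hadm.add_add_add_ne_zero h2 hxy))

end Offender

theorem statement13_general (h2 : (2 : ℤ) • (M ⊔ N) ≤ M ⊓ N)
    (hM : ∀ v ∈ M, v ≠ 0 → 4 ≤ ⟪v, v⟫) (hN : ∀ v ∈ N, ⟪v, v⟫ ≠ 2)
    (hoff : Offender M N w x y z) :
    ⟪w + x, w + y⟫ = 0 ∧ ⟪w + x, w + z⟫ = 0 ∧ ⟪w + y, w + z⟫ = 0 :=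
  ⟨hoff.inner_add_add_eq_zero h2 hM hN, hoff.swap_right.inner_add_add_eq_zero h2 hM hN,
    hoff.rotate.inner_add_add_eq_zero h2 hM hN⟩

end Offenders

/-- the three roots `w+x, w+y, w+z` of an offender are pairwise
orthogonal. -/
theorem statement13 (Υ M N : Submodule ℤ V) (h : LeechSetup Υ M N)
    (w x y z : V) (hoff : Offender M N w x y z) :
    ⟪w + x, w + y⟫ = 0 ∧ ⟪w + x, w + z⟫ = 0 ∧ ⟪w + y, w + z⟫ = 0 := by
  obtain ⟨-, -, -, -, ⟨-, -, -, -, hsup, hinf⟩, -, -, -, hM, -, -, -, hN⟩ := h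
  exact statement13_general (hsup ▸ hinf.ge) (fun v hv h0 ↦ hM ▸ minNorm_le_inner_self_s13 hv h0)
    (fun v hv ↦ inner_self_ne_of_lt_minNorm two_ne_zero (by norm_num [hN]) hv) hoff
end
end
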